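/- (Minimum potential drop in the integer case, from the proof of Proposition on integer convergence) Suppose the influence b and all edge weights w_e are positive integers. Then for every opinion profile x ∈ Θ^n, every agent i, and every y ∈ Θ with c_i(y, x_{−i}) < c_i(x), one has Φ(x) − Φ(y, x_{−i}) ≥ δ²; that is, every asynchronous improvement step decreases the potential Φ by at least δ². -/

import Mathlib

open Finset

/-- The recommendation function with threshold λ = 1/2. -/
noncomputable def sRec (x : ℝ) : ℝ :=
  if x < -(1/2 : ℝ) then -1 else if (1/2 : ℝ) < x then 1 else 0

/-- Membership in the opinion grid Θ = {-1, -1+δ, …, 1-δ, 1}. -/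
def inGrid (δ x : ℝ) : Prop := |x| ≤ 1 ∧ ∃ k : ℤ, x = k * δ

/-- Cost to agent `i` of holding opinion `y` when the current profile is `x`.
Non-edges are modelled by weight `0`. -/
noncomputable def cost {n : ℕ} (b : ℝ) (w : Fin n → Fin n → ℝ) (i : Fin n)
    (y : ℝ) (x : Fin n → ℝ) : ℝ :=
  b * (y - sRec (x i)) ^ 2 + ∑ j, w i j * (y - x j) ^ 2

/-- The potential Φ(x) = Σ_i b(x_i − s(x_i))² + Σ_{(i,j)∈E} w_{ij}(x_i − x_j)²;
the sum over undirected edges equals half of the sum over ordered pairs. -/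
noncomputable def pot {n : ℕ} (b : ℝ) (w : Fin n → Fin n → ℝ) (x : Fin n → ℝ) : ℝ :=
  (∑ i, b * (x i - sRec (x i)) ^ 2) + (1/2) * ∑ i, ∑ j, w i j * (x i - x j) ^ 2

lemma sRec_int (t : ℝ) : ∃ k : ℤ, sRec t = k := by
  unfold sRec
  split_ifs
  · exact ⟨-1, by simp⟩
  · exact ⟨1, by simp⟩
  · exact ⟨0, by simp⟩

/-- `sRec y` is a best recommendation for `y` among all recommendations. -/
lemma sRec_best (y t : ℝ) : (y - sRec y) ^ 2 ≤ (y - sRec t) ^ 2 := by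
  unfold sRec
  split_ifs <;> nlinarith

lemma cost_grid {n : ℕ} (m : ℕ) (hm : 2 ≤ m) (δ : ℝ) (hδ : δ = 1 / m)
    (b : ℝ) (w : Fin n → Fin n → ℝ)
    (hbInt : ∃ B : ℕ, 0 < B ∧ (B : ℝ) = b)
    (hwInt : ∀ i j, ∃ W : ℕ, (W : ℝ) = w i j)
    (x : Fin n → ℝ) (hx : ∀ i, inGrid δ (x i))
    (i : Fin n) (y : ℝ) (hy : inGrid δ y) :
    ∃ K : ℤ, cost b w i y x = K * δ ^ 2 := by
  obtain ⟨B, -, rfl⟩ := hbInt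
  choose W hW using hwInt
  choose k hk using fun j => (hx j).2
  obtain ⟨l, hl⟩ := hy.2
  obtain ⟨s, hs⟩ := sRec_int (x i)
  have hm0 : (m : ℝ) ≠ 0 := by
    have : m ≠ 0 := by omega
    exact_mod_cast this
  have h1 : (m : ℝ) * δ = 1 := by rw [hδ]; field_simp
  refine ⟨B * (l - s * m) ^ 2 + ∑ j, (W i j : ℤ) * (l - k j) ^ 2, ?_⟩
  unfold cost
  rw [hs]
  push_cast
  rw [add_mul, Finset.sum_mul]
  congr 1
  · have : y - s = (l - s * m) * δ := by rw [hl]; linear_combination (s : ℝ) * h1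
    rw [this]; ring
  · refine Finset.sum_congr rfl fun j _ => ?_
    rw [← hW i j, hl, hk j]; ring

lemma pot_diff {n : ℕ} (b : ℝ) (w : Fin n → Fin n → ℝ)
    (hsym : ∀ i j, w i j = w j i) (hdiag : ∀ i, w i i = 0)
    (x : Fin n → ℝ) (i : Fin n) (y : ℝ) :
    pot b w x - pot b w (Function.update x i y) =
      cost b w i (x i) x - cost b w i y x
        + b * ((y - sRec (x i)) ^ 2 - (y - sRec y) ^ 2) := by
  set x' := Function.update x i y with hx'
  have hA : ∑ a, b * (x a - sRec (x a)) ^ 2 - ∑ a, b * (x' a - sRec (x' a)) ^ 2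
      = b * (x i - sRec (x i)) ^ 2 - b * (y - sRec y) ^ 2 := by
    rw [← Finset.sum_sub_distrib, Finset.sum_eq_single i]
    · simp [hx']
    · intro a _ ha
      simp [hx', Function.update_of_ne ha]
    · simp
  let D : Fin n → ℝ := fun c => w i c * (x i - x c) ^ 2 - w i c * (y - x c) ^ 2
  have hpt : ∀ a c, w a c * (x a - x c) ^ 2 - w a c * (x' a - x' c) ^ 2
      = (if a = i then D c else 0) + (if c = i then D a else 0) := by
    intro a c
    by_cases ha : a = i <;> by_cases hc : c = i
    · subst ha; subst hc; simp [D, hdiag]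
    · subst ha; simp [D, hc, hx']
    · subst hc; simp [D, ha, hx', hsym a c]; ring
    · simp [ha, hc, hx']
  have hB : ∑ a, ∑ c, w a c * (x a - x c) ^ 2 - ∑ a, ∑ c, w a c * (x' a - x' c) ^ 2
      = 2 * ∑ c, D c := by
    simp_rw [← Finset.sum_sub_distrib, hpt, Finset.sum_add_distrib]
    rw [Finset.sum_comm]
    simp
    ring
  have hD : ∑ c, D c = ∑ c, w i c * (x i - x c) ^ 2 - ∑ c, w i c * (y - x c) ^ 2 :=
    Finset.sum_sub_distrib _ _
  unfold pot cost
  linear_combination hA + (1/2) * hB + hD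

/-- If the influence b and all edge weights are (nonnegative) integers, every
asynchronous improvement step decreases the potential Φ by at least δ². -/
theorem potential_drop_integer_case
    {n : ℕ} (hn : 2 ≤ n) (m : ℕ) (hm : 2 ≤ m) (δ : ℝ) (hδ : δ = 1 / m)
    (b : ℝ) (hb : 0 < b) (w : Fin n → Fin n → ℝ)
    (hsym : ∀ i j, w i j = w j i) (hdiag : ∀ i, w i i = 0)
    (hw : ∀ i j, 0 ≤ w i j)
    (hbInt : ∃ B : ℕ, 0 < B ∧ (B : ℝ) = b)
    (hwInt : ∀ i j, ∃ W : ℕ, (W : ℝ) = w i j)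
    (x : Fin n → ℝ) (hx : ∀ i, inGrid δ (x i))
    (i : Fin n) (y : ℝ) (hy : inGrid δ y)
    (himp : cost b w i y x < cost b w i (x i) x) :
    pot b w x - pot b w (Function.update x i y) ≥ δ ^ 2 := by
  obtain ⟨K, hK⟩ := cost_grid m hm δ hδ b w hbInt hwInt x hx i (x i) (hx i)
  obtain ⟨L, hL⟩ := cost_grid m hm δ hδ b w hbInt hwInt x hx i y hy
  have hm0 : (0 : ℝ) < m := by
    have : 0 < m := by omega
    exact_mod_cast this
  have hδ0 : 0 < δ ^ 2 := by rw [hδ]; positivity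
  rw [hK, hL] at himp
  have hlt : (L : ℝ) < K := lt_of_mul_lt_mul_right himp hδ0.le
  have hle : (L : ℝ) + 1 ≤ K := by
    have : L < K := by exact_mod_cast hlt
    exact_mod_cast this
  rw [pot_diff b w hsym hdiag, hK, hL]
  have h2 := mul_nonneg hb.le (sub_nonneg.2 (sRec_best y (x i)))
  nlinarith
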